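/- Suppose μ, ν are finite nonnegative Borel measures on ℝ^N and there exists S > 0 such that for every smooth compactly supported φ, S·(∫|φ|^{p*} dν)^{p/p*} ≤ ∫|φ|^p dμ, where 1 ≤ p < p*. Then there exist an at most countable set of points {x_i} and nonnegative numbers ν_i with ν = (absolutely continuous/diffuse part) + Σ_i ν_i δ_{x_i}, where the atomic part of ν is carried by countably many atoms, and for each atom S·ν_i^{p/p*} ≤ μ({x_i}). -/

import Mathlib

open MeasureTheory ENNReal

/-!
A smooth cutoff that equals `1` on a compact set `K` and is supported in an open set `U ⊇ K` turns
the functional inequality into `C * ν K ^ (p / q) ≤ μ U`. Shrinking `U` to `K` gives the same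
inequality between the measures on compact sets, in particular on singletons. The atoms of `ν` are
countable because `ν` is s-finite.
-/

open scoped Manifold

section

variable {E : Type*} [NormedAddCommGroup E] [NormedSpace ℝ E]

theorem exists_contDiff_one_of_isCompact_subset_isOpen [FiniteDimensional ℝ E]
    {K U : Set E} (hK : IsCompact K) (hU : IsOpen U) (hKU : K ⊆ U) :
    ∃ φ : E → ℝ, ContDiff ℝ (⊤ : ℕ∞) φ ∧ HasCompactSupport φ ∧ Set.range φ ⊆ Set.Icc 0 1 ∧
      Set.EqOn φ 1 K ∧ tsupport φ ⊆ U := by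
  obtain ⟨L, hL, hKL, hLU⟩ := exists_compact_between hK hU hKU
  obtain ⟨φ, hφ, hφ01, hsupp, hone⟩ :=
    exists_contMDiff_support_eq_eq_one_iff (n := ⊤) 𝓘(ℝ, E) isOpen_interior hK.isClosed hKL
  have htsupp : tsupport φ ⊆ L :=
    closure_minimal (hsupp.trans_subset interior_subset) hL.isClosed
  exact ⟨φ, hφ.contDiff, hL.of_isClosed_subset (isClosed_tsupport φ) htsupp, hφ01,
    fun x hx ↦ (hone x).1 hx, htsupp.trans hLU⟩

/-- Lions' reverse Hölder inequality between the measures `μ` and `ν`: the `L^q(ν)` norm of every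
test function is controlled by its `L^p(μ)` norm. The integrals are valued in `ℝ≥0∞`, so that
no integrability is presupposed, and both sides are raised to the power `p`. -/
def ReverseHolderInequality [MeasurableSpace E] (C : ℝ≥0∞) (p q : ℝ) (μ ν : Measure E) : Prop :=
  ∀ φ : E → ℝ, ContDiff ℝ (⊤ : ℕ∞) φ → HasCompactSupport φ →
    C * (∫⁻ x, ENNReal.ofReal (|φ x| ^ q) ∂ν) ^ (p / q) ≤ ∫⁻ x, ENNReal.ofReal (|φ x| ^ p) ∂μ

namespace ReverseHolderInequality

variable [FiniteDimensional ℝ E] [MeasurableSpace E] [OpensMeasurableSpace E]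
  {C : ℝ≥0∞} {p q : ℝ} {μ ν : Measure E} {K U : Set E}

theorem mul_measure_rpow_le_of_isCompact_subset_isOpen (h : ReverseHolderInequality C p q μ ν)
    (hp : 0 < p) (hq : 0 < q) (hK : IsCompact K) (hU : IsOpen U) (hKU : K ⊆ U) :
    C * ν K ^ (p / q) ≤ μ U := by
  obtain ⟨φ, hφ, hφc, hφ01, hφK, hφU⟩ := exists_contDiff_one_of_isCompact_subset_isOpen hK hU hKU
  have hν : ν K ≤ ∫⁻ x, ENNReal.ofReal (|φ x| ^ q) ∂ν :=
    meas_le_lintegral₀ (hφ.continuous.measurable.abs.pow_const q).ennreal_ofReal.aemeasurable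
      fun x hx ↦ by simp [hφK hx]
  have hφ_le (x : E) : |φ x| ≤ 1 :=
    have hx := hφ01 (Set.mem_range_self x)
    (abs_of_nonneg hx.1).trans_le hx.2
  have hμ : ∫⁻ x, ENNReal.ofReal (|φ x| ^ p) ∂μ ≤ μ U := by
    refine lintegral_le_meas (fun x ↦ ?_) fun x hx ↦ ?_
    · exact ofReal_le_one.2 (Real.rpow_le_one (abs_nonneg _) (hφ_le x) hp.le)
    · simp [image_eq_zero_of_notMem_tsupport (Set.notMem_subset hφU hx), hp.ne']
  calc C * ν K ^ (p / q)
      ≤ C * (∫⁻ x, ENNReal.ofReal (|φ x| ^ q) ∂ν) ^ (p / q) := by gcongr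
    _ ≤ ∫⁻ x, ENNReal.ofReal (|φ x| ^ p) ∂μ := h φ hφ hφc
    _ ≤ μ U := hμ

theorem mul_measure_rpow_le_of_isCompact [μ.OuterRegular] (h : ReverseHolderInequality C p q μ ν)
    (hp : 0 < p) (hq : 0 < q) (hK : IsCompact K) : C * ν K ^ (p / q) ≤ μ K := by
  rw [K.measure_eq_iInf_isOpen μ]
  exact le_iInf₂ fun U hKU ↦ le_iInf fun hU ↦
    h.mul_measure_rpow_le_of_isCompact_subset_isOpen hp hq hK hU hKU

end ReverseHolderInequality

theorem countable_setOf_measure_singleton_ne_zero {α : Type*} [MeasurableSpace α]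
    [MeasurableSingletonClass α] (ν : Measure α) [SFinite ν] : {x | ν {x} ≠ 0}.Countable := by
  simpa only [pos_iff_ne_zero, id, Set.ofPred_eq_eq_singleton] using
    Measure.countable_meas_level_set_pos (μ := ν) measurable_id

theorem stmt_14_general [FiniteDimensional ℝ E] [MeasurableSpace E] [OpensMeasurableSpace E]
    {C : ℝ≥0∞} {p q : ℝ} {μ ν : Measure E} [μ.OuterRegular] [SFinite ν] (hp : 0 < p) (hq : 0 < q)
    (h : ReverseHolderInequality C p q μ ν) :
    ∃ D : Set E, D.Countable ∧ (∀ x ∉ D, ν {x} = 0) ∧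
      ∀ x ∈ D, C * ν {x} ^ (p / q) ≤ μ {x} :=
  ⟨{x | ν {x} ≠ 0}, countable_setOf_measure_singleton_ne_zero ν, fun _ hx ↦ not_not.1 hx,
    fun _ _ ↦ h.mul_measure_rpow_le_of_isCompact hp hq isCompact_singleton⟩

end

theorem stmt_14 (N : ℕ) (p pstar S : ℝ) (hp : 1 ≤ p) (hpp : p < pstar) (hS : 0 < S)
    (μ ν : Measure (EuclideanSpace ℝ (Fin N))) [IsFiniteMeasure μ] [IsFiniteMeasure ν]
    (hyp : ∀ φ : EuclideanSpace ℝ (Fin N) → ℝ, ContDiff ℝ (⊤ : ℕ∞) φ → HasCompactSupport φ →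
      ENNReal.ofReal S * (∫⁻ x, ENNReal.ofReal (|φ x| ^ pstar) ∂ν) ^ (p / pstar) ≤
        ∫⁻ x, ENNReal.ofReal (|φ x| ^ p) ∂μ) :
    ∃ D : Set (EuclideanSpace ℝ (Fin N)), D.Countable ∧
      (∀ x ∉ D, ν {x} = 0) ∧
      ∀ x ∈ D, ENNReal.ofReal S * (ν {x}) ^ (p / pstar) ≤ μ {x} :=
  stmt_14_general (by linarith) (by linarith) hyp
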